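/- Let (𝒜,c) be a trigonometric ∨-system in V = ℂ^N, W ⊆ V* a linear subspace, and B = 𝒜 ∩ W a subsystem with span(B) = W. Let M : V → V be the linear operator M(v) = Σ_{β∈B} c_β β(v) β^∨ and set W^∨ = span{β^∨ : β ∈ B}. Then: (a) G_𝒜(u, M(v)) = G_B(u,v) for all u,v ∈ V; (b) for every α ∈ B, the vector α^∨ is an eigenvector of M; (c) the restriction of M to W^∨ is diagonalizable, so that W^∨ decomposes as a direct sum of eigenspaces of M. -/

import Mathlib

open scoped Classical
open Finset

noncomputable section

/-- Evaluation of a covector `α` on a vector `x` in `ℂ^N`. -/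
def ev {N : ℕ} (α x : Fin N → ℂ) : ℂ := ∑ i, α i * x i

/-- The bilinear form `G_𝒜` associated to a configuration. -/
def Gform {N : ℕ} (A : Finset (Fin N → ℂ)) (c : (Fin N → ℂ) → ℂ)
    (u v : Fin N → ℂ) : ℂ :=
  ∑ α ∈ A, c α * ev α u * ev α v

/-- `(α ∧ β)(a, b) = α(a)β(b) - α(b)β(a)`. -/
def wedge {N : ℕ} (α β a b : Fin N → ℂ) : ℂ :=
  ev α a * ev β b - ev α b * ev β a

/-- Non-degeneracy of `G_𝒜`. -/
def Nondeg {N : ℕ} (A : Finset (Fin N → ℂ)) (c : (Fin N → ℂ) → ℂ) : Prop :=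
  ∀ u : Fin N → ℂ, (∀ v : Fin N → ℂ, Gform A c u v = 0) → u = 0

/-- `dual` assigns to each covector `γ ∈ 𝒜` its `G_𝒜`-dual vector `γ^∨`. -/
def IsDual {N : ℕ} (A : Finset (Fin N → ℂ)) (c : (Fin N → ℂ) → ℂ)
    (dual : (Fin N → ℂ) → Fin N → ℂ) : Prop :=
  ∀ γ ∈ A, ∀ v : Fin N → ℂ, Gform A c (dual γ) v = ev γ v

/-- `γ` is proportional to `α`. -/
def Collin {N : ℕ} (α γ : Fin N → ℂ) : Prop := ∃ t : ℂ, γ = t • α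

/-- `γ₁ ∼ γ₂` iff `γ₁ + γ₂` or `γ₁ - γ₂` is an integer multiple of `α`. -/
def SeriesRel {N : ℕ} (α γ₁ γ₂ : Fin N → ℂ) : Prop :=
  ∃ m : ℤ, γ₁ + γ₂ = (m : ℂ) • α ∨ γ₁ - γ₂ = (m : ℂ) • α

/-- `Γ` is an (maximal) `α`-series of the configuration `A`. -/
def IsSeries {N : ℕ} (A : Finset (Fin N → ℂ)) (α : Fin N → ℂ)
    (Γ : Finset (Fin N → ℂ)) : Prop :=
  Γ.Nonempty ∧ (∀ γ ∈ Γ, γ ∈ A ∧ ¬ Collin α γ) ∧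
    (∀ γ₁ ∈ Γ, ∀ γ₂ ∈ Γ, SeriesRel α γ₁ γ₂) ∧
    (∀ β ∈ A, ¬ Collin α β → (∃ γ ∈ Γ, SeriesRel α β γ) → β ∈ Γ)

/-- The trigonometric ∨-conditions. -/
def IsTrigVSystem {N : ℕ} (A : Finset (Fin N → ℂ)) (c : (Fin N → ℂ) → ℂ)
    (dual : (Fin N → ℂ) → Fin N → ℂ) : Prop :=
  ∀ α ∈ A, ∀ Γ : Finset (Fin N → ℂ), IsSeries A α Γ →
    ∀ a b : Fin N → ℂ, ∑ β ∈ Γ, c β * ev α (dual β) * wedge α β a b = 0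

/-- The form `G^{(1)}_𝒜` evaluated at `(u, v)`. -/
def G1form {N : ℕ} (A : Finset (Fin N → ℂ)) (c : (Fin N → ℂ) → ℂ)
    (u v : Fin N → ℂ) : ℂ :=
  ∑ α ∈ A, ∑ β ∈ A, c α * c β * wedge α β u v ^ 2

/-- The form `G^{(2)}_𝒜` evaluated at `(u, v)`. -/
def G2form {N : ℕ} (A : Finset (Fin N → ℂ)) (c : (Fin N → ℂ) → ℂ)
    (dual : (Fin N → ℂ) → Fin N → ℂ) (u v : Fin N → ℂ) : ℂ :=
  ∑ α ∈ A, ∑ β ∈ A,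
    c α * c β * Gform A c (dual α) (dual β) * wedge α β u v ^ 2

/-- Complex cotangent. -/
def ccot (z : ℂ) : ℂ := Complex.cos z / Complex.sin z

/-- The matrix `F_i(x)` of third derivatives of the prepotential, `1 ≤ i ≤ N`. -/
def Fmat {N : ℕ} (A : Finset (Fin N → ℂ)) (c : (Fin N → ℂ) → ℂ) (lam : ℂ)
    (i : Fin N) (x : Fin N → ℂ) : Matrix (Fin N ⊕ Unit) (Fin N ⊕ Unit) ℂ :=
  Matrix.of fun p q =>
    match p, q with
    | Sum.inl p, Sum.inl q => lam * ∑ α ∈ A, c α * α i * α p * α q * ccot (ev α x)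
    | Sum.inl p, Sum.inr _ => 2 * ∑ α ∈ A, c α * α i * α p
    | Sum.inr _, Sum.inl q => 2 * ∑ α ∈ A, c α * α i * α q
    | Sum.inr _, Sum.inr _ => 0

/-- The constant matrix `F_{N+1}`. -/
def Flast {N : ℕ} (A : Finset (Fin N → ℂ)) (c : (Fin N → ℂ) → ℂ) :
    Matrix (Fin N ⊕ Unit) (Fin N ⊕ Unit) ℂ :=
  Matrix.of fun p q =>
    match p, q with
    | Sum.inl p, Sum.inl q => 2 * ∑ α ∈ A, c α * α p * α q
    | Sum.inr _, Sum.inr _ => 2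
    | _, _ => 0

/-- `(𝒜, c, λ)` satisfies the trigonometric WDVV equations. -/
def SatisfiesWDVV {N : ℕ} (A : Finset (Fin N → ℂ)) (c : (Fin N → ℂ) → ℂ)
    (lam : ℂ) : Prop :=
  IsUnit (Flast A c) ∧
    ∀ x : Fin N → ℂ, (∀ α ∈ A, Complex.sin (ev α x) ≠ 0) →
      ∀ i j : Fin N,
        Fmat A c lam i x * (Flast A c)⁻¹ * Fmat A c lam j x =
          Fmat A c lam j x * (Flast A c)⁻¹ * Fmat A c lam i x

/-- The covectors of `𝒜` lie in a lattice of full rank `N` in `(ℂ^N)^*`. -/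
def InLattice {N : ℕ} (A : Finset (Fin N → ℂ)) : Prop :=
  ∃ L : Fin N → Fin N → ℂ, LinearIndependent ℂ L ∧
    ∀ α ∈ A, ∃ m : Fin N → ℤ, α = ∑ i, (m i : ℂ) • L i

/-- No two covectors of `𝒜` are negatively proportional. -/
def PositiveSystem {N : ℕ} (A : Finset (Fin N → ℂ)) : Prop :=
  ∀ α ∈ A, ∀ t : ℝ, t < 0 → (t : ℂ) • α ∉ A

/-- The operator `M(v) = Σ_{β ∈ B} c_β β(v) β^∨`. -/
def Mop {N : ℕ} (B : Finset (Fin N → ℂ)) (c : (Fin N → ℂ) → ℂ)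
    (dual : (Fin N → ℂ) → Fin N → ℂ) (v : Fin N → ℂ) : Fin N → ℂ :=
  ∑ β ∈ B, (c β * ev β v) • dual β

/-- `W^∨ = span{β^∨ : β ∈ B}`. -/
def Wdual {N : ℕ} (B : Finset (Fin N → ℂ))
    (dual : (Fin N → ℂ) → Fin N → ℂ) : Submodule ℂ (Fin N → ℂ) :=
  Submodule.span ℂ (dual '' (B : Set (Fin N → ℂ)))

/-- `B` is non-isotropic: the restriction of `G_B` to `W^∨` is non-degenerate. -/
def NonIsotropic {N : ℕ} (B : Finset (Fin N → ℂ)) (c : (Fin N → ℂ) → ℂ)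
    (dual : (Fin N → ℂ) → Fin N → ℂ) : Prop :=
  ∀ u ∈ Wdual B dual, (∀ v ∈ Wdual B dual, Gform B c u v = 0) → u = 0

/-!
If `α ∈ B = 𝒜 ∩ W`, then `B` is a union of `α`-series of `𝒜` and of covectors proportional to `α`.
Series are defined by integer multiples of `α`, so this only needs `W` to be an additive subgroup.
The covectors proportional to `α` contribute nothing to `∑ c_β α(β^∨) (α ∧ β)`, so summing the
∨-conditions over the series gives `∑_{β ∈ B} c_β α(β^∨) (α ∧ β) = 0`. As `α(β^∨) = β(α^∨)`, this
says `α ∧ G_B(α^∨, ·) = 0`, that is, `G_B(α^∨, ·) = μ α` for some `μ`. Since `G_B = G_𝒜(·, M ·)`,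
non-degeneracy of `G_𝒜` turns this into `M α^∨ = μ α^∨`. Finally, a space spanned by finitely many
eigenvectors is the direct sum of its eigenspaces.
-/

section Eigenvectors

variable {K V : Type*} [CommRing K] [AddCommGroup V] [Module K V]

theorem span_le_iSup_eigenspace_inf_span {ι : Type*} (f : Module.End K V) {s : Set V} {μ : ι → K}
    (hs : ∀ x ∈ s, ∃ i, f x = μ i • x) :
    Submodule.span K s ≤ ⨆ i, f.eigenspace (μ i) ⊓ Submodule.span K s := by
  refine Submodule.span_le.2 fun x hx => ?_
  obtain ⟨i, hi⟩ := hs x hx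
  exact Submodule.mem_iSup_of_mem i ⟨Module.End.mem_eigenspace_iff.2 hi, Submodule.subset_span hx⟩

theorem exists_eigenspace_decomposition_of_span (f : Module.End K V) {s : Set V} (hfin : s.Finite)
    (hs : ∀ x ∈ s, ∃ μ : K, f x = μ • x) :
    ∃ (k : ℕ) (μ : Fin k → K), Function.Injective μ ∧
      ∀ w ∈ Submodule.span K s, ∃ u : Fin k → V,
        (∀ i, u i ∈ Submodule.span K s) ∧ (∀ i, f (u i) = μ i • u i) ∧ w = ∑ i, u i := by
  choose! m hm using hs
  obtain ⟨k, μ, hμ, hrange⟩ := (hfin.image m).fin_param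
  have hsμ : ∀ x ∈ s, ∃ i, f x = μ i • x := fun x hx => by
    obtain ⟨i, hi⟩ : m x ∈ Set.range μ := hrange ▸ Set.mem_image_of_mem m hx
    exact ⟨i, hi ▸ hm x hx⟩
  refine ⟨k, μ, hμ, fun w hw => ?_⟩
  obtain ⟨u, hu, rfl⟩ := (Submodule.mem_iSup_iff_exists_finsupp _ _).1
    (span_le_iSup_eigenspace_inf_span f hsμ hw)
  exact ⟨u, fun i => (hu i).2, fun i => Module.End.mem_eigenspace_iff.1 (hu i).1,
    u.sum_fintype _ fun _ => rfl⟩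

end Eigenvectors

section Configuration

variable {N : ℕ} {A B : Finset (Fin N → ℂ)} {c : (Fin N → ℂ) → ℂ}
  {dual : (Fin N → ℂ) → Fin N → ℂ} {α β γ : Fin N → ℂ}

/-- The covector `α` as a linear form on `ℂ^N`, bundling `ev α`. -/
def evDual (α : Fin N → ℂ) : Module.Dual ℂ (Fin N → ℂ) := dotProductBilin ℂ ℂ α

theorem evDual_apply (α x : Fin N → ℂ) : evDual α x = ev α x := rfl

/-- The form `G_𝒜` as a bundled bilinear form, giving the linearity of `Gform`. -/
def gramForm (A : Finset (Fin N → ℂ)) (c : (Fin N → ℂ) → ℂ) :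
    LinearMap.BilinForm ℂ (Fin N → ℂ) :=
  ∑ α ∈ A, c α • LinearMap.BilinForm.linMulLin (evDual α) (evDual α)

theorem gramForm_apply (A : Finset (Fin N → ℂ)) (c : (Fin N → ℂ) → ℂ) (u v : Fin N → ℂ) :
    gramForm A c u v = Gform A c u v := by
  simp [gramForm, Gform, evDual_apply, mul_assoc]

/-- The operator `M` as an endomorphism of `ℂ^N`, bundling `Mop` so that it has eigenspaces. -/
def subsystemOperator (B : Finset (Fin N → ℂ)) (c : (Fin N → ℂ) → ℂ)
    (dual : (Fin N → ℂ) → Fin N → ℂ) : Module.End ℂ (Fin N → ℂ) :=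
  ∑ β ∈ B, c β • (evDual β).smulRight (dual β)

theorem subsystemOperator_apply (B : Finset (Fin N → ℂ)) (c : (Fin N → ℂ) → ℂ)
    (dual : (Fin N → ℂ) → Fin N → ℂ) (v : Fin N → ℂ) :
    subsystemOperator B c dual v = Mop B c dual v := by
  simp [subsystemOperator, Mop, evDual_apply, mul_smul]

theorem ev_smul_left (t : ℂ) (α x : Fin N → ℂ) : ev (t • α) x = t * ev α x :=
  smul_dotProduct t α x

theorem exists_ev_ne_zero (hα : α ≠ 0) : ∃ x, ev α x ≠ 0 := by
  contrapose! hα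
  exact dotProduct_eq_zero α hα

theorem wedge_smul_self (t : ℂ) (α a b : Fin N → ℂ) : wedge α (t • α) a b = 0 := by
  simp only [wedge, ev_smul_left]
  ring

theorem Gform_comm (A : Finset (Fin N → ℂ)) (c : (Fin N → ℂ) → ℂ) (u v : Fin N → ℂ) :
    Gform A c u v = Gform A c v u :=
  Finset.sum_congr rfl fun _ _ => mul_right_comm _ _ _

theorem Gform_smul_left (A : Finset (Fin N → ℂ)) (c : (Fin N → ℂ) → ℂ) (t : ℂ)
    (u v : Fin N → ℂ) : Gform A c (t • u) v = t * Gform A c u v := by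
  simp only [← gramForm_apply, map_smul, LinearMap.smul_apply, smul_eq_mul]

theorem Nondeg.ext (hnd : Nondeg A c) {u v : Fin N → ℂ}
    (h : ∀ x, Gform A c u x = Gform A c v x) : u = v := by
  refine sub_eq_zero.1 (hnd _ fun x => ?_)
  rw [← gramForm_apply, map_sub, LinearMap.sub_apply, gramForm_apply, gramForm_apply, h, sub_self]

theorem SeriesRel.refl (α γ : Fin N → ℂ) : SeriesRel α γ γ :=
  ⟨0, Or.inr (by simp)⟩

theorem SeriesRel.symm (h : SeriesRel α β γ) : SeriesRel α γ β := by
  obtain ⟨m, h | h⟩ := h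
  · exact ⟨m, Or.inl (by rw [add_comm, h])⟩
  · exact ⟨-m, Or.inr (by rw [← neg_sub, h, Int.cast_neg, neg_smul])⟩

theorem SeriesRel.trans {δ : Fin N → ℂ} (h : SeriesRel α β γ) (h' : SeriesRel α γ δ) :
    SeriesRel α β δ := by
  obtain ⟨m, h | h⟩ := h <;> obtain ⟨n, h' | h'⟩ := h'
  · exact ⟨m - n, Or.inr (by rw [Int.cast_sub, sub_smul, ← h, ← h']; abel)⟩
  · exact ⟨m - n, Or.inl (by rw [Int.cast_sub, sub_smul, ← h, ← h']; abel)⟩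
  · exact ⟨m + n, Or.inl (by rw [Int.cast_add, add_smul, ← h, ← h']; abel)⟩
  · exact ⟨m + n, Or.inr (by rw [Int.cast_add, add_smul, ← h, ← h']; abel)⟩

theorem SeriesRel.mem_addSubgroup (h : SeriesRel α β γ) {L : AddSubgroup (Fin N → ℂ)}
    (hα : α ∈ L) (hγ : γ ∈ L) : β ∈ L := by
  obtain ⟨m, h | h⟩ := h <;> rw [Int.cast_smul_eq_zsmul] at h
  · exact eq_sub_of_add_eq h ▸ L.sub_mem (L.zsmul_mem hα m) hγ
  · exact eq_add_of_sub_eq h ▸ L.add_mem (L.zsmul_mem hα m) hγ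

/-- Equivalence of covectors modulo `α`, whose classes among the covectors of a configuration not
proportional to `α` are the `α`-series. -/
def seriesSetoid (α : Fin N → ℂ) : Setoid (Fin N → ℂ) where
  r := SeriesRel α
  iseqv := ⟨SeriesRel.refl α, SeriesRel.symm, SeriesRel.trans⟩

theorem isSeries_filter_seriesRel (hγ : γ ∈ A) (hαγ : ¬ Collin α γ) :
    IsSeries A α {β ∈ {β ∈ A | ¬ Collin α β} | SeriesRel α β γ} := by
  simp only [IsSeries, Finset.mem_filter]
  refine ⟨⟨γ, by simp [hγ, hαγ, SeriesRel.refl]⟩, fun _ h => h.1,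
    fun _ h₁ _ h₂ => h₁.2.trans h₂.2.symm, ?_⟩
  rintro β hβ hαβ ⟨γ', hγ', hβγ'⟩
  exact ⟨⟨hβ, hαβ⟩, hβγ'.trans hγ'.2⟩

theorem IsSeries.of_filter_mem {L : AddSubgroup (Fin N → ℂ)} {Γ : Finset (Fin N → ℂ)}
    (hα : α ∈ L) (hΓ : IsSeries {β ∈ A | β ∈ L} α Γ) : IsSeries A α Γ := by
  obtain ⟨hne, hmem, hrel, hmax⟩ := hΓ
  simp only [Finset.mem_filter] at hmem hmax
  refine ⟨hne, fun γ hγ => ⟨(hmem γ hγ).1.1, (hmem γ hγ).2⟩, hrel, ?_⟩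
  rintro β hβ hαβ ⟨γ, hγ, hβγ⟩
  exact hmax β ⟨hβ, hβγ.mem_addSubgroup hα (hmem γ hγ).1.2⟩ hαβ ⟨γ, hγ, hβγ⟩

-- The vectors `γ^∨` are still taken with respect to `G_𝒜`; the form `G_B` may be degenerate.
theorem IsTrigVSystem.filter_mem (h : IsTrigVSystem A c dual) (L : AddSubgroup (Fin N → ℂ)) :
    IsTrigVSystem {β ∈ A | β ∈ L} c dual := by
  intro α hα Γ hΓ
  obtain ⟨hαA, hαL⟩ := Finset.mem_filter.1 hα
  exact h α hαA Γ (hΓ.of_filter_mem hαL)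

theorem IsTrigVSystem.sum_mul_wedge_eq_zero (h : IsTrigVSystem A c dual) (hα : α ∈ A)
    (a b : Fin N → ℂ) : ∑ β ∈ A, c β * ev α (dual β) * wedge α β a b = 0 := by
  rw [← Finset.sum_filter_add_sum_filter_not A (Collin α)]
  have collinear : ∑ β ∈ A with Collin α β, c β * ev α (dual β) * wedge α β a b = 0 := by
    refine Finset.sum_eq_zero fun β hβ => ?_
    obtain ⟨t, rfl⟩ := (Finset.mem_filter.1 hβ).2
    rw [wedge_smul_self, mul_zero]
  have noncollinear : ∑ β ∈ A with ¬ Collin α β, c β * ev α (dual β) * wedge α β a b = 0 := by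
    refine Finset.sum_cancels_of_partition_cancels (seriesSetoid α) fun γ hγ => ?_
    obtain ⟨hγA, hαγ⟩ := Finset.mem_filter.1 hγ
    exact h α hα _ (isSeries_filter_seriesRel hγA hαγ) a b
  rw [collinear, noncollinear, add_zero]

theorem IsDual.ev_dual_comm (hdual : IsDual A c dual) (hα : α ∈ A) (hβ : β ∈ A) :
    ev α (dual β) = ev β (dual α) := by
  rw [← hdual α hα, Gform_comm, hdual β hβ]

theorem IsDual.Gform_Mop (hdual : IsDual A c dual) (hBA : B ⊆ A) (u v : Fin N → ℂ) :
    Gform A c u (Mop B c dual v) = Gform B c u v := by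
  rw [Gform_comm, ← gramForm_apply, Mop, map_sum, LinearMap.sum_apply]
  refine Finset.sum_congr rfl fun β hβ => ?_
  rw [gramForm_apply, Gform_smul_left, hdual β (hBA hβ), mul_right_comm]

theorem IsDual.sum_mul_wedge (hdual : IsDual A c dual) (hBA : B ⊆ A) (hα : α ∈ A)
    (a b : Fin N → ℂ) :
    ∑ β ∈ B, c β * ev α (dual β) * wedge α β a b =
      ev α a * Gform B c (dual α) b - ev α b * Gform B c (dual α) a := by
  rw [Gform, Gform, Finset.mul_sum, Finset.mul_sum, ← Finset.sum_sub_distrib]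
  refine Finset.sum_congr rfl fun β hβ => ?_
  rw [hdual.ev_dual_comm hα (hBA hβ), wedge]
  ring

theorem IsTrigVSystem.exists_Gform_dual_eq_mul_ev (hB : IsTrigVSystem B c dual)
    (hdual : IsDual A c dual) (hBA : B ⊆ A) (hα : α ∈ B) (hα0 : α ≠ 0) :
    ∃ μ : ℂ, ∀ v, Gform B c (dual α) v = μ * ev α v := by
  obtain ⟨a, ha⟩ := exists_ev_ne_zero hα0
  refine ⟨Gform B c (dual α) a / ev α a, fun v => ?_⟩
  have hwedge := hB.sum_mul_wedge_eq_zero hα a v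
  rw [hdual.sum_mul_wedge hBA (hBA hα)] at hwedge
  field_simp
  linear_combination hwedge

theorem Mop_dual_eq_smul (hnd : Nondeg A c) (hdual : IsDual A c dual) (hBA : B ⊆ A) (hα : α ∈ A)
    {μ : ℂ} (hμ : ∀ v, Gform B c (dual α) v = μ * ev α v) :
    Mop B c dual (dual α) = μ • dual α := by
  refine hnd.ext fun v => ?_
  calc Gform A c (Mop B c dual (dual α)) v
      = Gform B c (dual α) v := by rw [Gform_comm, hdual.Gform_Mop hBA, Gform_comm]
    _ = μ * Gform A c (dual α) v := by rw [hμ, hdual α hα]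
    _ = Gform A c (μ • dual α) v := (Gform_smul_left A c μ _ v).symm

theorem subsystem_operator_properties_general (hA0 : ∀ α ∈ A, α ≠ 0) (hnd : Nondeg A c)
    (hdual : IsDual A c dual) (hvsys : IsTrigVSystem A c dual) (L : AddSubgroup (Fin N → ℂ))
    (hB : ∀ α, α ∈ B ↔ α ∈ A ∧ α ∈ L) :
    (∀ u v, Gform A c u (Mop B c dual v) = Gform B c u v) ∧
    (∀ α ∈ B, ∃ μ : ℂ, Mop B c dual (dual α) = μ • dual α) ∧
    (∃ (k : ℕ) (μ : Fin k → ℂ), Function.Injective μ ∧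
      ∀ w ∈ Wdual B dual, ∃ u : Fin k → (Fin N → ℂ),
        (∀ i, u i ∈ Wdual B dual) ∧
        (∀ i, Mop B c dual (u i) = μ i • u i) ∧ w = ∑ i, u i) := by
  have hBL : B = {α ∈ A | α ∈ L} := by
    ext α
    rw [hB, Finset.mem_filter]
  have hBA : B ⊆ A := hBL ▸ Finset.filter_subset _ _
  have hBvsys : IsTrigVSystem B c dual := hBL ▸ hvsys.filter_mem L
  have eigenvector : ∀ α ∈ B, ∃ μ : ℂ, Mop B c dual (dual α) = μ • dual α := by
    intro α hα
    obtain ⟨μ, hμ⟩ := hBvsys.exists_Gform_dual_eq_mul_ev hdual hBA hα (hA0 α (hBA hα))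
    exact ⟨μ, Mop_dual_eq_smul hnd hdual hBA (hBA hα) hμ⟩
  refine ⟨hdual.Gform_Mop hBA, eigenvector, ?_⟩
  simp only [← subsystemOperator_apply] at eigenvector ⊢
  exact exists_eigenspace_decomposition_of_span _ (B.finite_toSet.image dual)
    (Set.forall_mem_image.2 eigenvector)

end Configuration

/-- properties of the operator `M` associated to a subsystem `B = 𝒜 ∩ W`
of a trigonometric ∨-system. -/
theorem subsystem_operator_properties {N : ℕ}
    (A : Finset (Fin N → ℂ)) (c : (Fin N → ℂ) → ℂ)
    (dual : (Fin N → ℂ) → Fin N → ℂ)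
    (hA0 : ∀ α ∈ A, α ≠ (0 : Fin N → ℂ))
    (hnd : Nondeg A c)
    (hdual : IsDual A c dual)
    (hvsys : IsTrigVSystem A c dual)
    (W : Submodule ℂ (Fin N → ℂ)) (B : Finset (Fin N → ℂ))
    (hB : ∀ α : Fin N → ℂ, α ∈ B ↔ α ∈ A ∧ α ∈ W)
    (hWspan : W = Submodule.span ℂ (B : Set (Fin N → ℂ))) :
    (∀ u v : Fin N → ℂ, Gform A c u (Mop B c dual v) = Gform B c u v) ∧
    (∀ α ∈ B, ∃ μ : ℂ, Mop B c dual (dual α) = μ • dual α) ∧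
    (∃ (k : ℕ) (μ : Fin k → ℂ), Function.Injective μ ∧
      ∀ w ∈ Wdual B dual, ∃ u : Fin k → (Fin N → ℂ),
        (∀ i, u i ∈ Wdual B dual) ∧
        (∀ i, Mop B c dual (u i) = μ i • u i) ∧ w = ∑ i, u i) := by
  exact subsystem_operator_properties_general hA0 hnd hdual hvsys W.toAddSubgroup hB

end
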